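/- (Proposition 2.1, 17-point case.) Fix γ > 0, b₁ ∈ ℝ with b₂ = 1 − b₁, and d₁, d₂, d₃ with d₁ + d₂ + d₃ = 1. Let A, B, C, k, u : ℝ² → ℂ be smooth (infinitely differentiable) and fix (x, z) ∈ ℝ². Let L̃ₓu(x, z; h) be the point-weighted flux stencil in the x-direction: with û₋₂ = b₁u(x−2h,z) + (b₂/2)[u(x−2h,z+2γh) + u(x−2h,z−2γh) − u(x,z−2γh) − u(x,z+2γh)], û₋₁ = b₁u(x−h,z) + (b₂/2)[u(x−h,z+γh) + u(x−h,z−γh) − u(x,z−γh) − u(x,z+γh)], û₀ = b₁u(x,z), û₁, û₂ the mirror images of û₋₁, û₋₂ about x, set L̃ₓu = (1/h²)[ −(9/8)A(x−h/2,z)((1/24)û₋₂ − (9/8)û₋₁ + (9/8)û₀ − (1/24)û₁) + (1/24)A(x−3h/2,z)(−(11/12)û₋₂ + (17/24)û₋₁ + (3/8)û₀ − (5/24)û₁ + (1/24)û₂) − (1/24)A(x+3h/2,z)(−(1/24)û₋₂ + (5/24)û₋₁ − (3/8)û₀ − (17/24)û₁ + (11/12)û₂) + (9/8)A(x+h/2,z)((1/24)û₋₁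 − (9/8)û₀ + (9/8)û₁ − (1/24)û₂) ]; let L̃_z u be defined analogously with the roles of x and z interchanged (spacing γh in z in place of h in x, B in place of A, averages formed in the x-direction, divided by (γh)²); and let Ĩ be the weighted mass-lumping operator ĨQ = d₁Q + d₂I⁽²⁾Q + d₃I⁽³⁾Q applied to Q = k²·C·u. Then L̃ₓu(x, z; h) + L̃_z u(x, z; h) + Ĩ(k²Cu)(x, z; h) = [∂/∂x(A ∂u/∂x) + ∂/∂z(B ∂u/∂z) + C k² u](x, z) + O(h⁴) as h → 0⁺; in particular the optimal point-weighting 17-point scheme is pointwise consistent with the Helmholtz-PML equation and is fourth-order accurate. -/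

import Mathlib

noncomputable section

/-- Point-weighted value `û` at `(xo, z)` relative to the center column `xc`,
with vertical half-width `s`. -/
def hatVal (b₁ : ℝ) (u : ℝ × ℝ → ℂ) (xo xc z s : ℝ) : ℂ :=
  (b₁ : ℂ) * u (xo, z) + (((1 : ℂ) - (b₁ : ℂ)) / 2) *
    (u (xo, z + s) + u (xo, z - s) - u (xc, z - s) - u (xc, z + s))

/-- Point-weighted value `p̃` at `(x, zo)` relative to the center row `zc`,
with horizontal half-width `s`. -/
def tildeVal (b₁ : ℝ) (u : ℝ × ℝ → ℂ) (x zo zc s : ℝ) : ℂ :=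
  (b₁ : ℂ) * u (x, zo) + (((1 : ℂ) - (b₁ : ℂ)) / 2) *
    (u (x + s, zo) + u (x - s, zo) - u (x - s, zc) - u (x + s, zc))

/-- The fourth-order flux-form stencil applied to values `vm2, …, vp2`
with coefficient values `Am32, Am12, Ap12, Ap32` and step `h`. -/
def fluxStencil (Am32 Am12 Ap12 Ap32 vm2 vm1 v0 vp1 vp2 : ℂ) (h : ℝ) : ℂ :=
  (1 / (h : ℂ) ^ 2) *
    ( -(9 / 8) * Am12 * ((1 / 24) * vm2 - (9 / 8) * vm1 + (9 / 8) * v0 - (1 / 24) * vp1)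
      + (1 / 24) * Am32 * (-(11 / 12) * vm2 + (17 / 24) * vm1 + (3 / 8) * v0
          - (5 / 24) * vp1 + (1 / 24) * vp2)
      - (1 / 24) * Ap32 * (-(1 / 24) * vm2 + (5 / 24) * vm1 - (3 / 8) * v0
          - (17 / 24) * vp1 + (11 / 12) * vp2)
      + (9 / 8) * Ap12 * ((1 / 24) * vm1 - (9 / 8) * v0 + (9 / 8) * vp1 - (1 / 24) * vp2) )

/-- The x-part `L̃ₓ` of the optimal point-weighting 17-point scheme. -/
def LxTilde (b₁ γ : ℝ) (A u : ℝ × ℝ → ℂ) (x z h : ℝ) : ℂ :=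
  fluxStencil (A (x - 3 * h / 2, z)) (A (x - h / 2, z)) (A (x + h / 2, z))
    (A (x + 3 * h / 2, z))
    (hatVal b₁ u (x - 2 * h) x z (2 * γ * h)) (hatVal b₁ u (x - h) x z (γ * h))
    ((b₁ : ℂ) * u (x, z))
    (hatVal b₁ u (x + h) x z (γ * h)) (hatVal b₁ u (x + 2 * h) x z (2 * γ * h)) h

/-- The z-part `L̃_z` of the optimal point-weighting 17-point scheme
(roles of x and z interchanged; z-spacing γh, coefficient `B`). -/
def LzTilde (b₁ γ : ℝ) (B u : ℝ × ℝ → ℂ) (x z h : ℝ) : ℂ :=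
  fluxStencil (B (x, z - 3 * γ * h / 2)) (B (x, z - γ * h / 2)) (B (x, z + γ * h / 2))
    (B (x, z + 3 * γ * h / 2))
    (tildeVal b₁ u x (z - 2 * γ * h) z (2 * h)) (tildeVal b₁ u x (z - γ * h) z h)
    ((b₁ : ℂ) * u (x, z))
    (tildeVal b₁ u x (z + γ * h) z h) (tildeVal b₁ u x (z + 2 * γ * h) z (2 * h)) (γ * h)

/-- The orthogonal-neighbor mass-lumping operator `I⁽²⁾`. -/
def I2 (γ : ℝ) (Q : ℝ × ℝ → ℂ) (x z h : ℝ) : ℂ :=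
  (1 / 3) * (Q (x - h, z) + Q (x + h, z) + Q (x, z - γ * h) + Q (x, z + γ * h))
    - (1 / 12) * (Q (x - 2 * h, z) + Q (x + 2 * h, z)
        + Q (x, z - 2 * γ * h) + Q (x, z + 2 * γ * h))

/-- The diagonal-neighbor mass-lumping operator `I⁽³⁾`. -/
def I3 (γ : ℝ) (Q : ℝ × ℝ → ℂ) (x z h : ℝ) : ℂ :=
  (1 / 3) * (Q (x - h, z - γ * h) + Q (x + h, z + γ * h)
      + Q (x - h, z + γ * h) + Q (x + h, z - γ * h))
    - (1 / 12) * (Q (x - 2 * h, z - 2 * γ * h) + Q (x + 2 * h, z + 2 * γ * h)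
        + Q (x - 2 * h, z + 2 * γ * h) + Q (x + 2 * h, z - 2 * γ * h))

/-- The weighted mass-lumping operator `Ĩ` of the point-weighting 17-point scheme. -/
def Itilde (γ d₁ d₂ d₃ : ℝ) (Q : ℝ × ℝ → ℂ) (x z h : ℝ) : ℂ :=
  (d₁ : ℂ) * Q (x, z) + (d₂ : ℂ) * I2 γ Q x z h + (d₃ : ℂ) * I3 γ Q x z h

/-!
Along a grid line every difference quotient of the scheme is a linear stencil `∑ᵢ wᵢ f (x + cᵢ h)`,
whose Taylor expansion is read off from the moments `∑ᵢ wᵢ cᵢʲ`. The inner stencils give `h` times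
the flux `a v'` at the nodes `x ± h/2` and `x ± 3h/2` with error `κ h⁵ + O(h⁶)`; the leading term is
odd in `h`, so it cancels when the fluxes on both sides of `x` are combined, and the outer staggered
difference keeps fourth order. Point weighting replaces `u` along the line by a curve with the same
first two derivatives at `x`, by the parallelogram law for `D²u`, and `(a u')'(x)` depends on `u`
only through these. The `z`-part is the `x`-part after exchanging the coordinates.
-/

open Asymptotics Filter Topology Finset
open scoped Nat

theorem comp_const_mul_isBigO_pow {E : Type*} [NormedAddCommGroup E] {n : ℕ} {g : ℝ → E}
    (hg : g =O[𝓝 0] fun t : ℝ => t ^ n) (r : ℝ) :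
    (fun h : ℝ => g (r * h)) =O[𝓝 0] fun h : ℝ => h ^ n := by
  have hscale : Tendsto (fun h : ℝ => r * h) (𝓝 0) (𝓝 0) :=
    Continuous.tendsto' (by fun_prop) _ _ (mul_zero r)
  refine (hg.comp_tendsto hscale).trans ?_
  simp only [Function.comp_def, mul_pow]
  exact isBigO_const_mul_self _ _ _

section Stencil

variable {ι E : Type*} [Fintype ι] [NormedAddCommGroup E] [NormedSpace ℝ E]
  {w c : ι → ℝ} {d : ℝ} {f : ℝ → E} {n : ℕ}

theorem sub_taylor_isBigO_pow (hf : ContDiff ℝ n f) (x : ℝ) :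
    (fun t : ℝ => f (x + t) - ∑ j ∈ range n, (t ^ j / j !) • iteratedDeriv j f x)
      =O[𝓝 0] fun t : ℝ => t ^ n := by
  have hshift : Tendsto (fun t : ℝ => x + t) (𝓝 0) (𝓝 x) :=
    Continuous.tendsto' (by fun_prop) _ _ (add_zero x)
  have hremainder := ((taylor_isLittleO_univ hf).comp_tendsto hshift).isBigO
  have hlast : (fun t : ℝ => (t ^ n / n !) • iteratedDeriv n f x) =O[𝓝 0] fun t : ℝ => t ^ n :=
    IsBigO.of_bound (‖iteratedDeriv n f x‖ / n !) (.of_forall fun t => by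
      simp only [norm_smul, norm_div, Real.norm_natCast]
      exact le_of_eq (by ring))
  simp only [Function.comp_def, add_sub_cancel_left] at hremainder
  refine (hremainder.add hlast).congr_left fun t => ?_
  simp only [taylor_within_apply, iteratedDerivWithin_univ, sum_range_succ, add_sub_cancel_left,
    div_eq_inv_mul]
  abel

/-- The linear finite-difference stencil `∑ᵢ wᵢ f (x + cᵢ h)` with weights `w` and nodes `c`, the
nodes being measured in units of the step `h` from the base point `x`. -/
def stencil (w c : ι → ℝ) (f : ℝ → E) (x h : ℝ) : E :=
  ∑ i, w i • f (x + c i * h)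

/-- The `j`-th moment of a stencil; it is `j!` times the coefficient of `hʲ f⁽ʲ⁾(x)` in the
expansion of `stencil w c f x h`. -/
def stencilMoment (w c : ι → ℝ) (j : ℕ) : ℝ :=
  ∑ i, w i * c i ^ j

theorem stencil_sub_moments_isBigO_pow (w c : ι → ℝ) (hf : ContDiff ℝ n f) (x : ℝ) :
    (fun h : ℝ => stencil w c f x h
      - ∑ j ∈ range n, (stencilMoment w c j * h ^ j / j !) • iteratedDeriv j f x)
      =O[𝓝 0] fun h : ℝ => h ^ n := by
  have hnodes := IsBigO.fun_sum (s := univ) fun i _ =>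
    (comp_const_mul_isBigO_pow (sub_taylor_isBigO_pow hf x) (c i)).const_smul_left (w i)
  refine hnodes.congr_left fun h => ?_
  simp only [Pi.smul_apply, stencil, stencilMoment, smul_sub, sum_sub_distrib, smul_sum, smul_smul,
    sum_mul, sum_div, sum_smul]
  rw [sum_comm (s := univ)]
  congr! 4
  ring

theorem stencil_sub_smul_isBigO_pow (hw : ∀ j < n, stencilMoment w c (j + 1) = 0)
    (hf : ContDiff ℝ (n + 1) f) (x : ℝ) :
    (fun h : ℝ => stencil w c f x h - (∑ i, w i) • f x) =O[𝓝 0] fun h : ℝ => h ^ (n + 1) := by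
  refine (stencil_sub_moments_isBigO_pow w c (n := n + 1) (mod_cast hf) x).congr_left fun h => ?_
  have hhigher : ∑ j ∈ range n, (stencilMoment w c (j + 1) * h ^ (j + 1) / (j + 1)!) •
      iteratedDeriv (j + 1) f x = 0 :=
    sum_eq_zero fun j hj => by simp [hw j (mem_range.1 hj)]
  rw [sum_range_succ', hhigher]
  simp [stencilMoment]

theorem stencil_sub_deriv_sub_moments_isBigO_pow (w c : ι → ℝ) (d : ℝ) (hf : ContDiff ℝ (n + 1) f)
    (x : ℝ) :
    (fun h : ℝ => stencil w c f x h - h • deriv f (x + d * h)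
      - ∑ j ∈ range (n + 1),
          ((stencilMoment w c j - j * d ^ (j - 1)) * h ^ j / j !) • iteratedDeriv j f x)
      =O[𝓝 0] fun h : ℝ => h ^ (n + 1) := by
  have hstencil := stencil_sub_moments_isBigO_pow w c (n := n + 1) (mod_cast hf) x
  have hderiv := (isBigO_refl (fun h : ℝ => h) (𝓝 0)).smul
    (comp_const_mul_isBigO_pow
      (sub_taylor_isBigO_pow (contDiff_succ_iff_deriv.1 hf).2.2 x) d)
  refine (hstencil.sub (hderiv.congr_right fun h => (pow_succ' h n).symm)).congr_left fun h => ?_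
  have hshift : ∑ j ∈ range (n + 1), (j * d ^ (j - 1) * h ^ j / j !) • iteratedDeriv j f x
      = h • ∑ j ∈ range n, ((d * h) ^ j / j !) • iteratedDeriv j (deriv f) x := by
    rw [sum_range_succ', smul_sum]
    simp only [Nat.cast_zero, zero_mul, zero_div, zero_smul, add_zero, Nat.add_sub_cancel,
      iteratedDeriv_succ', smul_smul]
    refine sum_congr rfl fun j _ => ?_
    congr 1
    rw [Nat.factorial_succ]
    push_cast
    field_simp
    ring
  simp only [sub_mul, sub_div, sub_smul, sum_sub_distrib, hshift, smul_sub]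
  abel

/-- The stencil with weights `w` and nodes `c` computes `h f'(x + d h)` exactly for polynomials `f`
of degree less than `n`. The condition is expressed through moments, by testing on the monomials;
at `j = 0` the right-hand side is `0` whatever the value of the truncated exponent. -/
def IsDerivExact (w c : ι → ℝ) (d : ℝ) (n : ℕ) : Prop :=
  ∀ j < n, stencilMoment w c j = j * d ^ (j - 1)

theorem IsDerivExact.stencil_sub_deriv_isBigO (hw : IsDerivExact w c d (n + 1))
    (hf : ContDiff ℝ (n + 1) f) (x : ℝ) :
    (fun h : ℝ => stencil w c f x h - h • deriv f (x + d * h))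
      =O[𝓝 0] fun h : ℝ => h ^ (n + 1) := by
  refine (stencil_sub_deriv_sub_moments_isBigO_pow w c d hf x).congr_left fun h => ?_
  rw [sum_eq_zero fun j hj => by simp [hw j (mem_range.1 hj)], sub_zero]

theorem IsDerivExact.exists_stencil_sub_deriv_sub_isBigO (hw : IsDerivExact w c d n)
    (hf : ContDiff ℝ (n + 1) f) (x : ℝ) :
    ∃ κ : E, (fun h : ℝ => stencil w c f x h - h • deriv f (x + d * h) - h ^ n • κ)
      =O[𝓝 0] fun h : ℝ => h ^ (n + 1) := by
  refine ⟨((stencilMoment w c n - n * d ^ (n - 1)) / n !) • iteratedDeriv n f x,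
    (stencil_sub_deriv_sub_moments_isBigO_pow w c d hf x).congr_left fun h => ?_⟩
  rw [sum_range_succ, sum_eq_zero fun j hj => by simp [hw j (mem_range.1 hj)], zero_add, smul_smul]
  congr 2
  ring

end Stencil

section Flux

variable {ι 𝔸 : Type*} [Fintype ι] [NormedRing 𝔸] [NormedAlgebra ℝ 𝔸]
  {w c : ι → ℝ} {d x : ℝ} {a v : ℝ → 𝔸} {n : ℕ}

theorem IsDerivExact.exists_flux_sub_isBigO (hw : IsDerivExact w c d n)
    (ha : DifferentiableAt ℝ a x) (hv : ContDiff ℝ (n + 1) v) :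
    ∃ κ : 𝔸, (fun h : ℝ => a (x + d * h) * stencil w c v x h
        - h • (a (x + d * h) * deriv v (x + d * h)) - h ^ n • κ)
      =O[𝓝 0] fun h : ℝ => h ^ (n + 1) := by
  obtain ⟨κ, hκ⟩ := hw.exists_stencil_sub_deriv_sub_isBigO hv x
  have hpoint : Tendsto (fun h : ℝ => x + d * h) (𝓝 0) (𝓝 x) :=
    Continuous.tendsto' (by fun_prop) _ _ (by simp)
  have ha_bounded : (fun h : ℝ => a (x + d * h)) =O[𝓝 0] fun _ => (1 : ℝ) :=
    (ha.continuousAt.tendsto.comp hpoint).isBigO_one ℝ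
  have ha_lipschitz : (fun h : ℝ => a (x + d * h) - a x) =O[𝓝 0] fun h : ℝ => h := by
    refine (ha.isBigO_sub.comp_tendsto hpoint).trans ?_
    simp only [Function.comp_def, add_sub_cancel_left]
    exact isBigO_const_mul_self _ _ _
  have hcoefficient : (fun h : ℝ => h ^ n • ((a (x + d * h) - a x) * κ))
      =O[𝓝 0] fun h : ℝ => h ^ n * h :=
    (isBigO_refl (fun h : ℝ => h ^ n) (𝓝 0)).smul <| by
      simpa using ha_lipschitz.mul (isBigO_const_const κ (one_ne_zero (α := ℝ)) (𝓝 0))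
  have hproduct := ha_bounded.mul hκ
  simp only [one_mul] at hproduct
  refine ⟨a x * κ, (hproduct.add (hcoefficient.congr_right fun h => (pow_succ h n).symm)).congr_left
    fun h => ?_⟩
  simp only [mul_sub, sub_mul, mul_smul_comm, smul_sub]
  abel

/-- The fluxes `a * stencil w c v` at the nodes `x ± d h`, combined into an even function of `h`.
The reflected stencil approximates `-h v'(x - d h)`, so the sum stands for the flux difference
`h (a v' (x + d h) - a v' (x - d h))`. -/
def symmetrizedFlux (w c : ι → ℝ) (d : ℝ) (a v : ℝ → 𝔸) (x h : ℝ) : 𝔸 :=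
  a (x + d * h) * stencil w c v x h + a (x - d * h) * stencil w c v x (-h)

-- Symmetrization cancels the leading error `hⁿ κ` because `n` is odd; this is the extra order that
-- makes up for the division by `h` in the outer difference.
theorem IsDerivExact.symmetrizedFlux_sub_isBigO (hw : IsDerivExact w c d n) (hn : Odd n)
    (ha : DifferentiableAt ℝ a x) (hv : ContDiff ℝ (n + 1) v) :
    (fun h : ℝ => symmetrizedFlux w c d a v x h
        - h • (a (x + d * h) * deriv v (x + d * h) - a (x - d * h) * deriv v (x - d * h)))
      =O[𝓝 0] fun h : ℝ => h ^ (n + 1) := by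
  obtain ⟨κ, hκ⟩ := hw.exists_flux_sub_isBigO ha hv
  refine (hκ.add (comp_const_mul_isBigO_pow hκ (-1))).congr_left fun h => ?_
  simp only [symmetrizedFlux, neg_mul, one_mul, mul_neg, ← sub_eq_add_neg, hn.neg_pow, neg_smul,
    smul_sub]
  abel

end Flux

section FluxScheme

variable {a v : ℝ → ℂ}

theorem isDerivExact_half :
    IsDerivExact ![1 / 24, -9 / 8, 9 / 8, -1 / 24] ![-1, 0, 1, 2] (1 / 2) 5 := by
  intro j hj
  interval_cases j <;> norm_num [stencilMoment, Fin.sum_univ_succ]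

theorem isDerivExact_three_halves :
    IsDerivExact ![-1 / 24, 5 / 24, -3 / 8, -17 / 24, 11 / 12] ![-2, -1, 0, 1, 2] (3 / 2) 5 := by
  intro j hj
  interval_cases j <;> norm_num [stencilMoment, Fin.sum_univ_succ]

theorem isDerivExact_staggered :
    IsDerivExact ![1 / 24, -9 / 8, 9 / 8, -1 / 24] ![-3 / 2, -1 / 2, 1 / 2, 3 / 2] 0 5 := by
  intro j hj
  interval_cases j <;> norm_num [stencilMoment, Fin.sum_univ_succ]

/-- The scheme `fluxStencil` with its arguments sampled from functions `a` and `v`: it discretizes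
`(a v')'` at `x` with step `h`. -/
def fluxScheme (a v : ℝ → ℂ) (x h : ℝ) : ℂ :=
  fluxStencil (a (x - 3 * h / 2)) (a (x - h / 2)) (a (x + h / 2)) (a (x + 3 * h / 2))
    (v (x - 2 * h)) (v (x - h)) (v x) (v (x + h)) (v (x + 2 * h)) h

theorem fluxScheme_eq_symmetrizedFlux (a v : ℝ → ℂ) (x h : ℝ) :
    fluxScheme a v x h = (h ^ 2)⁻¹ •
      ((9 / 8 : ℝ) • symmetrizedFlux ![1 / 24, -9 / 8, 9 / 8, -1 / 24]
            ![-1, 0, 1, 2] (1 / 2) a v x h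
        - (1 / 24 : ℝ) • symmetrizedFlux ![-1 / 24, 5 / 24, -3 / 8, -17 / 24, 11 / 12]
            ![-2, -1, 0, 1, 2] (3 / 2) a v x h) := by
  simp only [fluxScheme, fluxStencil, symmetrizedFlux, stencil, Fin.sum_univ_four,
    Fin.sum_univ_five, Matrix.cons_val, Complex.real_smul]
  push_cast
  ring_nf

theorem fluxScheme_sub_deriv_isBigO (ha : ContDiff ℝ 5 a) (hv : ContDiff ℝ 6 v) (x : ℝ) :
    (fun h : ℝ => fluxScheme a v x h - deriv (fun t => a t * deriv v t) x)
      =O[𝓝[≠] 0] fun h : ℝ => h ^ 4 := by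
  have ha_diff : DifferentiableAt ℝ a x := ha.differentiable (by norm_num) x
  have hv' : ContDiff ℝ ((5 : ℕ) + 1) v := mod_cast hv
  have hflux : ContDiff ℝ ((4 : ℕ) + 1) fun t => a t * deriv v t :=
    mod_cast ha.mul (contDiff_succ_iff_deriv.1 hv').2.2
  have hinner := isDerivExact_half.symmetrizedFlux_sub_isBigO (by decide) ha_diff hv'
  have houter := isDerivExact_three_halves.symmetrizedFlux_sub_isBigO (by decide) ha_diff hv'
  have hdivergence := (isBigO_refl (fun h : ℝ => h) (𝓝 0)).smul <|
    isDerivExact_staggered.stencil_sub_deriv_isBigO hflux x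
  have hnumerator := ((hinner.const_smul_left (9 / 8 : ℝ)).sub
    (houter.const_smul_left (1 / 24 : ℝ))).add
      (hdivergence.congr_right fun h => (pow_succ' h 5).symm)
  refine ((isBigO_refl (fun h : ℝ => (h ^ 2)⁻¹) (𝓝[≠] 0)).smul
    (hnumerator.mono nhdsWithin_le_nhds)).congr' ?_ ?_ <;>
    filter_upwards [self_mem_nhdsWithin] with h (hh : h ≠ 0)
  · rw [fluxScheme_eq_symmetrizedFlux,
      ← inv_smul_smul₀ (pow_ne_zero 2 hh) (deriv (fun t => a t * deriv v t) x), ← smul_sub]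
    simp only [Pi.smul_apply, stencil, Fin.sum_univ_four, Matrix.cons_val, Complex.real_smul]
    push_cast
    ring_nf
  · rw [smul_eq_mul]
    field_simp

end FluxScheme

section PointWeighting

variable {E F : Type*} [NormedAddCommGroup E] [NormedSpace ℝ E] [NormedAddCommGroup F]
  [NormedSpace ℝ F]

theorem hasDerivAt_add_sub_smul (p e : E) (x t : ℝ) :
    HasDerivAt (fun s : ℝ => p + (s - x) • e) e t := by
  simpa using (((hasDerivAt_id t).sub_const x).smul_const e).const_add p

theorem hasDerivAt_comp_add_sub_smul {f : E → F} (hf : Differentiable ℝ f) (p e : E) (x t : ℝ) :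
    HasDerivAt (fun s : ℝ => f (p + (s - x) • e)) (fderiv ℝ f (p + (t - x) • e) e) t :=
  (hf _).hasFDerivAt.comp_hasDerivAt t (hasDerivAt_add_sub_smul p e x t)

theorem hasDerivAt_fderiv_comp_add_sub_smul {f : E → F} (hf : ContDiff ℝ 2 f) (p e : E) (x : ℝ) :
    HasDerivAt (fun s : ℝ => fderiv ℝ f (p + (s - x) • e) e) (fderiv ℝ (fderiv ℝ f) p e e) x := by
  have hf' : Differentiable ℝ (fderiv ℝ f) :=
    (hf.fderiv_right (m := 1) (by norm_num)).differentiable one_ne_zero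
  simpa using (hasDerivAt_comp_add_sub_smul hf' p e x x).clm_apply (hasDerivAt_const x e)

variable {γ x : ℝ} {u : ℝ × ℝ → ℂ}

/-- The point-weighted values `û` as a function of the abscissa `t`. The half-width is the signed
quantity `γ (t - x)`, so that the curve is smooth at `x`; `hatVal` is even in its half-width. -/
def hatCurve (b γ : ℝ) (u : ℝ × ℝ → ℂ) (x z t : ℝ) : ℂ :=
  hatVal b u t x z (γ * (t - x))

theorem hatVal_neg (b : ℝ) (u : ℝ × ℝ → ℂ) (xo xc z s : ℝ) :
    hatVal b u xo xc z (-s) = hatVal b u xo xc z s := by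
  simp only [hatVal, sub_neg_eq_add, ← sub_eq_add_neg]
  ring

theorem hatCurve_one (γ : ℝ) (u : ℝ × ℝ → ℂ) (x z : ℝ) :
    hatCurve 1 γ u x z = fun t => u (t, z) := by
  ext t
  simp [hatCurve, hatVal]

theorem hatCurve_self (b γ : ℝ) (u : ℝ × ℝ → ℂ) (x z : ℝ) :
    hatCurve b γ u x z x = b * u (x, z) := by
  simp [hatCurve, hatVal]

theorem contDiff_hatCurve {n : WithTop ℕ∞} (hu : ContDiff ℝ n u) (b γ x z : ℝ) :
    ContDiff ℝ n (hatCurve b γ u x z) := by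
  unfold hatCurve hatVal
  fun_prop

theorem hatCurve_eq (b γ : ℝ) (u : ℝ × ℝ → ℂ) (x z : ℝ) :
    hatCurve b γ u x z = fun t : ℝ => b * u ((x, z) + (t - x) • (1, 0)) + (1 - b) / 2 *
      (u ((x, z) + (t - x) • ((1, 0) + (0, γ))) + u ((x, z) + (t - x) • ((1, 0) - (0, γ)))
        - u ((x, z) + (t - x) • (-(0, γ))) - u ((x, z) + (t - x) • (0, γ))) := by
  ext t
  simp only [hatCurve, hatVal, Prod.smul_mk, Prod.mk_add_mk, Prod.mk_sub_mk, Prod.neg_mk,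
    smul_eq_mul]
  ring_nf

theorem deriv_hatCurve (hu : Differentiable ℝ u) (b γ x z : ℝ) :
    deriv (hatCurve b γ u x z) = fun t : ℝ =>
      b * fderiv ℝ u ((x, z) + (t - x) • (1, 0)) (1, 0) + (1 - b) / 2 *
        (fderiv ℝ u ((x, z) + (t - x) • ((1, 0) + (0, γ))) ((1, 0) + (0, γ))
          + fderiv ℝ u ((x, z) + (t - x) • ((1, 0) - (0, γ))) ((1, 0) - (0, γ))
          - fderiv ℝ u ((x, z) + (t - x) • (-(0, γ))) (-(0, γ))
          - fderiv ℝ u ((x, z) + (t - x) • (0, γ)) (0, γ)) := by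
  ext t
  have hline := fun e => hasDerivAt_comp_add_sub_smul hu (x, z) e x t
  rw [hatCurve_eq]
  exact (((hline _).const_mul _).add
    (((((hline _).add (hline _)).sub (hline _)).sub (hline _)).const_mul _)).deriv

theorem deriv_hatCurve_self (hu : Differentiable ℝ u) (b γ x z : ℝ) :
    deriv (hatCurve b γ u x z) x = fderiv ℝ u (x, z) (1, 0) := by
  simp only [deriv_hatCurve hu, sub_self, zero_smul, add_zero, map_add, map_sub, map_neg]
  ring

-- The parallelogram law for the quadratic form `e ↦ D²u(e, e)` removes the dependence on `γ`.
theorem deriv_deriv_hatCurve_self (hu : ContDiff ℝ 2 u) (b γ x z : ℝ) :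
    deriv (deriv (hatCurve b γ u x z)) x = fderiv ℝ (fderiv ℝ u) (x, z) (1, 0) (1, 0) := by
  have hline := fun e => hasDerivAt_fderiv_comp_add_sub_smul hu (x, z) e x
  rw [deriv_hatCurve (hu.differentiable two_ne_zero)]
  refine (((hline _).const_mul _).add
    (((((hline _).add (hline _)).sub (hline _)).sub (hline _)).const_mul _)).deriv.trans ?_
  simp only [map_add, map_sub, map_neg, add_apply, sub_apply, neg_apply]
  ring

theorem deriv_mul_deriv_hatCurve {a : ℝ → ℂ} (ha : DifferentiableAt ℝ a x) (hu : ContDiff ℝ 2 u)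
    (b γ z : ℝ) :
    deriv (fun t => a t * deriv (hatCurve b γ u x z) t) x =
      deriv (fun t => a t * deriv (fun s => u (s, z)) t) x := by
  have hproduct : ∀ b' : ℝ, deriv (fun t => a t * deriv (hatCurve b' γ u x z) t) x =
      deriv a x * fderiv ℝ u (x, z) (1, 0)
        + a x * fderiv ℝ (fderiv ℝ u) (x, z) (1, 0) (1, 0) := by
    intro b'
    have hcurve : Differentiable ℝ (deriv (hatCurve b' γ u x z)) :=
      (contDiff_succ_iff_deriv.1 (contDiff_hatCurve (one_add_one_eq_two (R := WithTop ℕ∞) ▸ hu)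
        b' γ x z)).2.2.differentiable one_ne_zero
    rw [deriv_fun_mul ha (hcurve x), deriv_hatCurve_self (hu.differentiable two_ne_zero),
      deriv_deriv_hatCurve_self hu]
  rw [hproduct b, ← hproduct 1, hatCurve_one]

theorem LxTilde_eq_fluxScheme (b γ : ℝ) (A u : ℝ × ℝ → ℂ) (x z h : ℝ) :
    LxTilde b γ A u x z h = fluxScheme (fun t => A (t, z)) (hatCurve b γ u x z) x h := by
  have hleft : ∀ r, hatVal b u (x - r) x z (γ * r) = hatCurve b γ u x z (x - r) := fun r => by
    rw [hatCurve, sub_sub_cancel_left, mul_neg, hatVal_neg]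
  have hright : ∀ r, hatVal b u (x + r) x z (γ * r) = hatCurve b γ u x z (x + r) := fun r => by
    rw [hatCurve, add_sub_cancel_left]
  rw [LxTilde, fluxScheme, mul_comm 2 γ, mul_assoc, hleft, hleft, hright, hright, hatCurve_self]

theorem LzTilde_eq_LxTilde_swap (b : ℝ) (hγ : γ ≠ 0) (B u : ℝ × ℝ → ℂ) (x z h : ℝ) :
    LzTilde b γ B u x z h = LxTilde b γ⁻¹ (B ∘ Prod.swap) (u ∘ Prod.swap) z x (γ * h) := by
  have hcancel : ∀ r, γ⁻¹ * (γ * r) = r := fun r => inv_mul_cancel_left₀ hγ r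
  have hcancel_two : 2 * γ⁻¹ * (γ * h) = 2 * h := by rw [mul_assoc, hcancel]
  simp only [LzTilde, LxTilde, tildeVal, hatVal, Function.comp_apply, Prod.swap_prod_mk, hcancel,
    hcancel_two, mul_assoc]

theorem LxTilde_sub_deriv_isBigO {A : ℝ × ℝ → ℂ} (hA : ContDiff ℝ 5 A) (hu : ContDiff ℝ 6 u)
    (b γ x z : ℝ) :
    (fun h : ℝ => LxTilde b γ A u x z h
        - deriv (fun t => A (t, z) * deriv (fun s => u (s, z)) t) x)
      =O[𝓝[≠] 0] fun h : ℝ => h ^ 4 := by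
  have hA_row : ContDiff ℝ 5 fun t => A (t, z) := by fun_prop
  simp only [LxTilde_eq_fluxScheme, ← deriv_mul_deriv_hatCurve
    (hA_row.differentiable (by norm_num) x) (hu.of_le (by norm_num)) b γ z]
  exact fluxScheme_sub_deriv_isBigO hA_row (contDiff_hatCurve hu b γ x z) x

theorem LzTilde_sub_deriv_isBigO {B : ℝ × ℝ → ℂ} (hγ : γ ≠ 0) (hB : ContDiff ℝ 5 B)
    (hu : ContDiff ℝ 6 u) (b x z : ℝ) :
    (fun h : ℝ => LzTilde b γ B u x z h
        - deriv (fun t => B (x, t) * deriv (fun s => u (x, s)) t) z)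
      =O[𝓝[≠] 0] fun h : ℝ => h ^ 4 := by
  have hstep : Tendsto (fun h : ℝ => γ * h) (𝓝[≠] 0) (𝓝[≠] 0) := by
    refine tendsto_nhdsWithin_iff.2 ⟨?_, eventually_mem_nhdsWithin.mono fun h => mul_ne_zero hγ⟩
    exact (Continuous.tendsto' (by fun_prop) _ _ (mul_zero γ)).mono_left nhdsWithin_le_nhds
  have hswap : ∀ {n : WithTop ℕ∞}, ContDiff ℝ n (Prod.swap : ℝ × ℝ → ℝ × ℝ) :=
    contDiff_snd.prodMk contDiff_fst
  simp only [LzTilde_eq_LxTilde_swap b hγ]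
  refine ((LxTilde_sub_deriv_isBigO (hB.comp hswap) (hu.comp hswap) b γ⁻¹ z x).comp_tendsto
    hstep).trans ?_
  simp only [Function.comp_def, mul_pow]
  exact isBigO_const_mul_self _ _ _

end PointWeighting

section MassLumping

variable {Q : ℝ × ℝ → ℂ}

theorem lumping_sub_half_isBigO {E F : Type*} [NormedAddCommGroup E] [NormedSpace ℝ E]
    [NormedAddCommGroup F] [NormedSpace ℝ F] {f : E → F} (hf : ContDiff ℝ 4 f) (p e : E) :
    (fun h : ℝ => stencil ![1 / 3, 1 / 3, -1 / 12, -1 / 12] ![-1, 1, -2, 2]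
        (fun t => f (p + t • e)) 0 h - (1 / 2 : ℝ) • f p)
      =O[𝓝 0] fun h : ℝ => h ^ 4 := by
  have hmoments : ∀ j < 3, stencilMoment ![1 / 3, 1 / 3, -1 / 12, -1 / 12]
      ![-1, 1, -2, 2] (j + 1) = 0 := by
    intro j hj
    interval_cases j <;> norm_num [stencilMoment, Fin.sum_univ_succ]
  have hline : ContDiff ℝ ((3 : ℕ) + 1) fun t : ℝ => f (p + t • e) := by
    norm_num
    fun_prop
  refine (stencil_sub_smul_isBigO_pow hmoments hline 0).congr_left fun h => ?_
  norm_num [Fin.sum_univ_succ]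

theorem I2_sub_isBigO (hQ : ContDiff ℝ 4 Q) (γ x z : ℝ) :
    (fun h : ℝ => I2 γ Q x z h - Q (x, z)) =O[𝓝 0] fun h : ℝ => h ^ 4 := by
  refine ((lumping_sub_half_isBigO hQ (x, z) (1, 0)).add
    (lumping_sub_half_isBigO hQ (x, z) (0, γ))).congr_left fun h => ?_
  simp only [I2, stencil, Fin.sum_univ_four, Matrix.cons_val, Complex.real_smul, Prod.smul_mk,
    Prod.mk_add_mk, smul_eq_mul]
  push_cast
  ring_nf

theorem I3_sub_isBigO (hQ : ContDiff ℝ 4 Q) (γ x z : ℝ) :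
    (fun h : ℝ => I3 γ Q x z h - Q (x, z)) =O[𝓝 0] fun h : ℝ => h ^ 4 := by
  refine ((lumping_sub_half_isBigO hQ (x, z) (1, γ)).add
    (lumping_sub_half_isBigO hQ (x, z) (1, -γ))).congr_left fun h => ?_
  simp only [I3, stencil, Fin.sum_univ_four, Matrix.cons_val, Complex.real_smul, Prod.smul_mk,
    Prod.mk_add_mk, smul_eq_mul]
  push_cast
  ring_nf

theorem Itilde_sub_isBigO {d₁ d₂ d₃ : ℝ} (hd : d₁ + d₂ + d₃ = 1) (hQ : ContDiff ℝ 4 Q)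
    (γ x z : ℝ) :
    (fun h : ℝ => Itilde γ d₁ d₂ d₃ Q x z h - Q (x, z)) =O[𝓝 0] fun h : ℝ => h ^ 4 := by
  refine (((I2_sub_isBigO hQ γ x z).const_mul_left (d₂ : ℂ)).add
    ((I3_sub_isBigO hQ γ x z).const_mul_left (d₃ : ℂ))).congr_left fun h => ?_
  have hd₁ : (d₁ : ℂ) = 1 - d₂ - d₃ := by
    rw [← Complex.ofReal_one, ← hd]
    push_cast
    ring
  rw [Itilde, hd₁]
  ring

end MassLumping

theorem exists_norm_le_mul_pow_of_isBigO {E : Type*} [SeminormedAddCommGroup E] {f : ℝ → E} {n : ℕ}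
    (hf : f =O[𝓝[>] 0] fun h : ℝ => h ^ n) :
    ∃ M δ : ℝ, 0 < M ∧ 0 < δ ∧ ∀ h : ℝ, 0 < h → h < δ → ‖f h‖ ≤ M * h ^ n := by
  obtain ⟨M, hM, hbound⟩ := hf.exists_pos
  obtain ⟨δ, hδ, hIoo⟩ := mem_nhdsGT_iff_exists_Ioo_subset.1 hbound.bound
  refine ⟨M, δ, hM, hδ, fun h hpos hlt => (hIoo ⟨hpos, hlt⟩).trans_eq ?_⟩
  rw [Real.norm_of_nonneg (pow_nonneg hpos.le n)]

theorem pointWeighting17_consistent_general {γ : ℝ} (hγ : γ ≠ 0) (b₁ : ℝ) {d₁ d₂ d₃ : ℝ}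
    (hd : d₁ + d₂ + d₃ = 1) {A B C k u : ℝ × ℝ → ℂ} (hA : ContDiff ℝ 5 A) (hB : ContDiff ℝ 5 B)
    (hC : ContDiff ℝ 4 C) (hk : ContDiff ℝ 4 k) (hu : ContDiff ℝ 6 u) (x z : ℝ) :
    (fun h : ℝ => LxTilde b₁ γ A u x z h + LzTilde b₁ γ B u x z h
          + Itilde γ d₁ d₂ d₃ (fun p => k p ^ 2 * C p * u p) x z h
        - (deriv (fun t => A (t, z) * deriv (fun s => u (s, z)) t) x
            + deriv (fun t => B (x, t) * deriv (fun s => u (x, s)) t) z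
            + C (x, z) * k (x, z) ^ 2 * u (x, z)))
      =O[𝓝[≠] 0] fun h : ℝ => h ^ 4 := by
  have hQ : ContDiff ℝ 4 fun p => k p ^ 2 * C p * u p :=
    ((hk.pow 2).mul hC).mul (hu.of_le (by norm_num))
  refine (((LxTilde_sub_deriv_isBigO hA hu b₁ γ x z).add
    (LzTilde_sub_deriv_isBigO hγ hB hu b₁ x z)).add
    ((Itilde_sub_isBigO hd hQ γ x z).mono nhdsWithin_le_nhds)).congr_left fun h => ?_
  ring

/-- Proposition 2.1, 17-point case: the optimal point-weighting
17-point scheme is pointwise consistent with the Helmholtz-PML equation and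
fourth-order accurate. -/
theorem pointWeighting17_consistent
    (γ : ℝ) (hγ : 0 < γ) (b₁ : ℝ) (d₁ d₂ d₃ : ℝ) (hd : d₁ + d₂ + d₃ = 1)
    (A B C k u : ℝ × ℝ → ℂ)
    (hA : ContDiff ℝ (⊤ : ℕ∞) A) (hB : ContDiff ℝ (⊤ : ℕ∞) B) (hC : ContDiff ℝ (⊤ : ℕ∞) C)
    (hk : ContDiff ℝ (⊤ : ℕ∞) k) (hu : ContDiff ℝ (⊤ : ℕ∞) u) (x z : ℝ) :
    ∃ M δ : ℝ, 0 < M ∧ 0 < δ ∧ ∀ h : ℝ, 0 < h → h < δ →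
      ‖LxTilde b₁ γ A u x z h + LzTilde b₁ γ B u x z h
          + Itilde γ d₁ d₂ d₃ (fun p => k p ^ 2 * C p * u p) x z h
        - (deriv (fun t => A (t, z) * deriv (fun s => u (s, z)) t) x
            + deriv (fun t => B (x, t) * deriv (fun s => u (x, s)) t) z
            + C (x, z) * k (x, z) ^ 2 * u (x, z))‖ ≤ M * h ^ 4 :=
  exists_norm_le_mul_pow_of_isBigO <|
    (pointWeighting17_consistent_general hγ.ne' b₁ hd (contDiff_infty.1 hA 5)
      (contDiff_infty.1 hB 5) (contDiff_infty.1 hC 4) (contDiff_infty.1 hk 4)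
      (contDiff_infty.1 hu 6) x z).mono (nhdsGT_le_nhdsNE 0)

end
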